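/- Let 1 < p < q < p*. Then there exists an open bounded convex set K ⊂ ℝ^N such that for every open bounded convex set Ω ⊂ ℝ^N one has μ_{p,q}(Ω) · (diam(Ω))^{p + Np/q − N} ≤ μ_{p,q}(K) · (diam(K))^{p + Np/q − N}; equivalently, for every c > 0 the shape optimization problem sup{μ_{p,q}(Ω) : Ω ⊂ ℝ^N open bounded convex, diam(Ω) ≥ c} admits a maximizer. -/

import Mathlib

open MeasureTheory Metric Set Real

noncomputable section

/-- The Rayleigh quotient `(∫_Ω |∇v|^p) / (∫_Ω |v|^q)^(p/q)`, where the gradient is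
understood as the (a.e. defined) Fréchet derivative. -/
def rayleighQuot {N : ℕ} (p q : ℝ) (Ω : Set (EuclideanSpace ℝ (Fin N)))
    (v : EuclideanSpace ℝ (Fin N) → ℝ) : ℝ :=
  (∫ x in Ω, ‖fderiv ℝ v x‖ ^ p) / (∫ x in Ω, |v x| ^ q) ^ (p / q)

/-- The first (generalized) Dirichlet eigenvalue `λ_{p,q}(Ω)`: infimum of the Rayleigh
quotient over nontrivial smooth functions compactly supported in `Ω`. -/
def lambdaPQ {N : ℕ} (p q : ℝ) (Ω : Set (EuclideanSpace ℝ (Fin N))) : ℝ :=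
  sInf { R : ℝ | ∃ v : EuclideanSpace ℝ (Fin N) → ℝ,
    ContDiff ℝ (⊤ : ℕ∞) v ∧ HasCompactSupport v ∧ tsupport v ⊆ Ω ∧
    (∃ x ∈ Ω, v x ≠ 0) ∧ R = rayleighQuot p q Ω v }

/-- The first nontrivial (generalized) Neumann eigenvalue `μ_{p,q}(Ω)`: infimum of the
Rayleigh quotient over nontrivial Lipschitz functions on the closure of `Ω` satisfying
the constraint `∫_Ω |v|^(q-2) v = 0`. -/
def muPQ {N : ℕ} (p q : ℝ) (Ω : Set (EuclideanSpace ℝ (Fin N))) : ℝ :=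
  sInf { R : ℝ | ∃ v : EuclideanSpace ℝ (Fin N) → ℝ, ∃ K : NNReal,
    LipschitzOnWith K v (closure Ω) ∧ (∃ x ∈ Ω, v x ≠ 0) ∧
    (∫ x in Ω, |v x| ^ (q - 2) * v x) = 0 ∧ R = rayleighQuot p q Ω v }

/-- `q` is below the critical Sobolev exponent `p* = Np/(N-p)` (with `p* = ∞` if `p ≥ N`). -/
def ltCritical (N : ℕ) (p q : ℝ) : Prop := p < N → q < N * p / (N - p)

end

/-! The functional is invariant under similarities, so only domains of diameter one containing the
origin matter. Testing `μ` with the distance to a point, recentred, bounds it by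
`C |Ω| ^ (1 - p / q)`. As `p < q`, the exponent is positive and a maximizing sequence with positive
limit cannot lose its volume. By Blaschke selection a subsequence converges in the Hausdorff metric
to a compact convex set, which thus has nonempty interior, and membership in the domains converges
almost everywhere. Finally `μ` is upper semicontinuous along this convergence: a test function of
the limit extends to a Lipschitz function on the whole space, and the constants that recentre it on
the approximating domains cost nothing in the limit, because by convexity of `|t| ^ q` their effect
on the `L^q` norm is controlled by integrals which tend to zero. -/

open Filter Topology Bornology

section HausdorffConvergence

variable {ι : Type*} {l : Filter ι}

theorem subset_thickening_of_hausdorffEDist_lt {X : Type*} [PseudoEMetricSpace X] {s t : Set X}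
    {ε : ℝ} (h : hausdorffEDist s t < ENNReal.ofReal ε) : s ⊆ thickening ε t := fun _ hx ↦
  (infEDist_le_hausdorffEDist_of_mem hx).trans_lt h

theorem eventually_subset_thickening {X : Type*} [PseudoEMetricSpace X] {s : ι → Set X} {t : Set X}
    (h : Tendsto (fun i ↦ hausdorffEDist (s i) t) l (𝓝 0)) {ε : ℝ} (hε : 0 < ε) :
    ∀ᶠ i in l, s i ⊆ thickening ε t ∧ t ⊆ thickening ε (s i) := by
  filter_upwards [h.eventually_lt_const (ENNReal.ofReal_pos.2 hε)] with i hi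
  exact ⟨subset_thickening_of_hausdorffEDist_lt hi,
    subset_thickening_of_hausdorffEDist_lt (hausdorffEDist_comm (s := s i) ▸ hi)⟩

theorem tendsto_diam_of_tendsto_hausdorffEDist {X : Type*} [PseudoMetricSpace X] {s : ι → Set X}
    {t : Set X} (ht : IsBounded t) (h : Tendsto (fun i ↦ hausdorffEDist (s i) t) l (𝓝 0)) :
    Tendsto (fun i ↦ diam (s i)) l (𝓝 (diam t)) := by
  refine Metric.tendsto_nhds.2 fun ε hε ↦ ?_
  filter_upwards [eventually_subset_thickening h (ε := ε / 3) (by positivity)] with i ⟨hst, hts⟩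
  have hs : IsBounded (s i) := ht.thickening.subset hst
  have hle : diam (s i) ≤ diam t + 2 * (ε / 3) :=
    (diam_mono hst ht.thickening).trans (diam_thickening_le t (by positivity))
  have hge : diam t ≤ diam (s i) + 2 * (ε / 3) :=
    (diam_mono hts hs.thickening).trans (diam_thickening_le (s i) (by positivity))
  rw [Real.dist_eq, abs_lt]
  constructor <;> linarith

theorem eventually_notMem_of_tendsto_hausdorffEDist {X : Type*} [PseudoEMetricSpace X]
    {s : ι → Set X} {t : Set X} (h : Tendsto (fun i ↦ hausdorffEDist (s i) t) l (𝓝 0)) {x : X}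
    (hx : x ∉ closure t) : ∀ᶠ i in l, x ∉ s i := by
  obtain ⟨ε, hε, hxε⟩ : ∃ ε > 0, x ∉ thickening ε t := by
    simpa [closure_eq_iInter_thickening] using hx
  filter_upwards [eventually_subset_thickening h hε] with i hi hxi
  exact hxε (hi.1 hxi)

variable {E : Type*} [NormedAddCommGroup E] [NormedSpace ℝ E]

theorem convex_of_tendsto_hausdorffEDist [l.NeBot] {s : ι → Set E} {t : Set E} (ht : IsClosed t)
    (hs : ∀ i, Convex ℝ (s i)) (h : Tendsto (fun i ↦ hausdorffEDist (s i) t) l (𝓝 0)) :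
    Convex ℝ t := by
  refine convex_iff_segment_subset.2 fun x hx y hy ↦ ?_
  rw [← ht.closure_eq, closure_eq_iInter_thickening]
  refine subset_iInter₂ fun ε hε ↦ ?_
  obtain ⟨i, hst, hts⟩ := (eventually_subset_thickening h (half_pos hε)).exists
  calc segment ℝ x y
      ⊆ thickening (ε / 2) (s i) := ((hs i).thickening _).segment_subset (hts hx) (hts hy)
    _ ⊆ thickening (ε / 2) (thickening (ε / 2) t) := thickening_subset_of_subset _ hst
    _ ⊆ thickening ε t := by simpa using thickening_thickening_subset (ε / 2) (ε / 2) t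

/-- A functional separating `x` from `s` has norm `> 0`, so it grows by nearly `r` times its norm
inside the ball, but by at most `ε` times its norm on the thickening. -/
theorem mem_of_ball_subset_thickening {s : Set E} (hs : Convex ℝ s) (hso : IsOpen s) {x : E}
    {r ε : ℝ} (hr : 0 < r) (hεr : ε < r) (h : ball x r ⊆ thickening ε s) : x ∈ s := by
  by_contra hx
  obtain ⟨f, hf⟩ := geometric_hahn_banach_open_point hs hso hx
  obtain ⟨b, hb, -⟩ := mem_thickening_iff.1 (h (mem_ball_self hr))
  have hf0 : 0 < ‖f‖ := norm_pos_iff.2 fun hf0 ↦ by simpa [hf0] using hf b hb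
  obtain ⟨u, hu, hfu⟩ : ∃ u : E, ‖u‖ < 1 ∧ ε / r * ‖f‖ < f u := by
    obtain ⟨u, hu, hfu⟩ := f.exists_lt_apply_of_lt_opNorm
      (mul_lt_of_lt_one_left hf0 ((div_lt_one hr).2 hεr))
    rcases lt_abs.1 hfu with hfu | hfu
    exacts [⟨u, hu, hfu⟩, ⟨-u, by simpa using hu, by simpa using hfu⟩]
  have hxu : x + r • u ∈ ball x r := by
    simpa [norm_smul, abs_of_pos hr] using mul_lt_of_lt_one_right hr hu
  obtain ⟨a, ha, hxa⟩ := mem_thickening_iff.1 (h hxu)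
  have hupper : f (x + r • u) - f a ≤ ε * ‖f‖ := by
    rw [← map_sub, mul_comm]
    refine (le_abs_self _).trans ((f.le_opNorm _).trans ?_)
    gcongr
    exact (dist_eq_norm (x + r • u) a).symm.trans_le hxa.le
  have hlower : f x + ε * ‖f‖ < f (x + r • u) := by
    have := mul_lt_mul_of_pos_left hfu hr
    rw [← mul_assoc, mul_div_cancel₀ _ hr.ne'] at this
    simpa using this
  linarith [hf a ha]

theorem eventually_mem_of_tendsto_hausdorffEDist {s : ι → Set E} {t : Set E}
    (hs : ∀ i, Convex ℝ (s i)) (hso : ∀ i, IsOpen (s i))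
    (h : Tendsto (fun i ↦ hausdorffEDist (s i) t) l (𝓝 0)) {x : E} (hx : x ∈ interior t) :
    ∀ᶠ i in l, x ∈ s i := by
  obtain ⟨r, hr, hrt⟩ := Metric.mem_nhds_iff.1 (mem_interior_iff_mem_nhds.1 hx)
  filter_upwards [eventually_subset_thickening h (half_pos hr)] with i hi
  exact mem_of_ball_subset_thickening (hs i) (hso i) hr (half_lt_self hr) (hrt.trans hi.2)

theorem ae_eventually_mem_iff_mem_interior [FiniteDimensional ℝ E] [MeasurableSpace E]
    [BorelSpace E] (μ : Measure E) [μ.IsAddHaarMeasure] {s : ι → Set E} {t : Set E}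
    (hs : ∀ i, Convex ℝ (s i)) (hso : ∀ i, IsOpen (s i)) (ht : Convex ℝ t)
    (h : Tendsto (fun i ↦ hausdorffEDist (s i) t) l (𝓝 0)) :
    ∀ᵐ x ∂μ, ∀ᶠ i in l, (x ∈ s i ↔ x ∈ interior t) := by
  filter_upwards [measure_eq_zero_iff_ae_notMem.1 (ht.addHaar_frontier μ)] with x hx
  by_cases hxt : x ∈ interior t
  · filter_upwards [eventually_mem_of_tendsto_hausdorffEDist hs hso h hxt] with i hi
    exact iff_of_true hi hxt
  · filter_upwards [eventually_notMem_of_tendsto_hausdorffEDist h fun hc ↦ hx ⟨hc, hxt⟩] with i hi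
    exact iff_of_false hi hxt

theorem blaschke_selection {D : Set E} (hD : IsCompact D) {s : ℕ → Set E}
    (hs : ∀ n, Convex ℝ (s n)) (hne : ∀ n, (s n).Nonempty) (hsD : ∀ n, s n ⊆ D) :
    ∃ t ⊆ D, IsCompact t ∧ Convex ℝ t ∧ ∃ φ : ℕ → ℕ, StrictMono φ ∧
      Tendsto (fun n ↦ hausdorffEDist (s (φ n)) t) atTop (𝓝 0) := by
  have hcl : ∀ n, closure (s n) ⊆ D := fun n ↦ closure_minimal (hsD n) hD.isClosed
  let K : ℕ → TopologicalSpace.NonemptyCompacts E := fun n ↦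
    ⟨⟨closure (s n), hD.of_isClosed_subset isClosed_closure (hcl n)⟩, (hne n).closure⟩
  obtain ⟨t, htD, φ, hφ, hlim⟩ :=
    (TopologicalSpace.NonemptyCompacts.isCompact_subsets_of_isCompact hD).tendsto_subseq
      (x := K) hcl
  have hlim' : Tendsto (fun n ↦ hausdorffEDist (s (φ n)) t) atTop (𝓝 0) :=
    (tendsto_iff_edist_tendsto_0.1 hlim).congr fun n ↦ hausdorffEDist_closure_left
  exact ⟨t, htD, t.isCompact, convex_of_tendsto_hausdorffEDist t.isCompact.isClosed
    (fun n ↦ hs (φ n)) hlim', φ, hφ, hlim'⟩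

end HausdorffConvergence

section DualityPow

/-- The duality map `t ↦ |t| ^ (q - 2) * t` of `L^q`, the derivative of `t ↦ |t| ^ q / q`. -/
noncomputable def dualityPow (q t : ℝ) : ℝ := |t| ^ (q - 2) * t

variable {q : ℝ}

theorem dualityPow_nonneg {t : ℝ} (ht : 0 ≤ t) : 0 ≤ dualityPow q t := by
  unfold dualityPow; positivity

theorem dualityPow_nonpos {t : ℝ} (ht : t ≤ 0) : dualityPow q t ≤ 0 :=
  mul_nonpos_of_nonneg_of_nonpos (by positivity) ht

theorem hasDerivAt_abs_rpow_dualityPow (hq : 1 < q) (t : ℝ) :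
    HasDerivAt (fun t : ℝ ↦ |t| ^ q) (q * dualityPow q t) t := by
  simpa only [dualityPow, mul_assoc] using hasDerivAt_abs_rpow t hq

theorem continuous_dualityPow (hq : 1 < q) : Continuous (dualityPow q) := by
  have h : Continuous (deriv fun t : ℝ ↦ |t| ^ q) :=
    (contDiff_norm_rpow (E := ℝ) hq).continuous_deriv le_rfl
  rw [funext fun t ↦ (hasDerivAt_abs_rpow_dualityPow hq t).deriv] at h
  simpa [(zero_lt_one.trans hq).ne'] using h.const_mul q⁻¹

theorem convexOn_abs_rpow (hq : 1 ≤ q) : ConvexOn ℝ univ fun t : ℝ ↦ |t| ^ q := by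
  refine ⟨convex_univ, fun x _ y _ a b ha hb hab ↦ ?_⟩
  calc |a • x + b • y| ^ q
      ≤ (a • |x| + b • |y|) ^ q := by
        gcongr
        exact (convexOn_univ_norm (E := ℝ)).2 (mem_univ x) (mem_univ y) ha hb hab
    _ ≤ a • |x| ^ q + b • |y| ^ q := (convexOn_rpow hq).2 (abs_nonneg x) (abs_nonneg y) ha hb hab

theorem add_mul_sub_le_of_convexOn_of_hasDerivAt {S : Set ℝ} {f : ℝ → ℝ} {f' a b : ℝ}
    (hf : ConvexOn ℝ S f) (ha : a ∈ S) (hb : b ∈ S) (hfa : HasDerivAt f f' a) :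
    f a + f' * (b - a) ≤ f b := by
  rcases lt_trichotomy a b with hab | rfl | hab
  · have h := hf.le_slope_of_hasDerivAt ha hb hab hfa
    rw [slope_def_field, le_div_iff₀ (sub_pos.2 hab)] at h
    linarith
  · simp
  · have h := hf.slope_le_of_hasDerivAt hb ha hab hfa
    rw [slope_def_field, div_le_iff₀ (sub_pos.2 hab)] at h
    linarith

theorem abs_rpow_le_abs_sub_rpow_add (hq : 1 < q) (a c : ℝ) :
    |a| ^ q ≤ |a - c| ^ q + q * c * dualityPow q a := by
  have h := add_mul_sub_le_of_convexOn_of_hasDerivAt (convexOn_abs_rpow hq.le) (mem_univ a)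
    (mem_univ (a - c)) (hasDerivAt_abs_rpow_dualityPow hq a)
  linarith

theorem exists_integral_dualityPow_sub_eq_zero {α : Type*} [MeasurableSpace α] {μ : Measure α}
    [IsFiniteMeasure μ] (hq : 1 < q) {f : α → ℝ} (hf : AEStronglyMeasurable f μ) {B : ℝ}
    (hB : 0 ≤ B) (hfB : ∀ᵐ x ∂μ, |f x| ≤ B) :
    ∃ c, |c| ≤ B ∧ ∫ x, dualityPow q (f x - c) ∂μ = 0 := by
  have hφ := continuous_dualityPow hq
  obtain ⟨D, hD⟩ := (isCompact_Icc (a := -(2 * B)) (b := 2 * B)).exists_bound_of_continuousOn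
    hφ.continuousOn
  have hcont : ContinuousOn (fun c ↦ ∫ x, dualityPow q (f x - c) ∂μ) (Icc (-B) B) := by
    refine continuousOn_of_dominated (bound := fun _ ↦ D)
      (fun c _ ↦ hφ.comp_aestronglyMeasurable (hf.sub aestronglyMeasurable_const))
      (fun c hc ↦ ?_) (integrable_const D)
      (.of_forall fun x ↦ (hφ.comp (continuous_const.sub continuous_id)).continuousOn)
    filter_upwards [hfB] with x hx
    obtain ⟨hx₁, hx₂⟩ := abs_le.1 hx
    exact hD _ ⟨by linarith [hc.2], by linarith [hc.1]⟩
  have hright : ∫ x, dualityPow q (f x - B) ∂μ ≤ 0 := by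
    refine integral_nonpos_of_ae ?_
    filter_upwards [hfB] with x hx
    exact dualityPow_nonpos (sub_nonpos.2 (abs_le.1 hx).2)
  have hleft : 0 ≤ ∫ x, dualityPow q (f x - -B) ∂μ := by
    refine integral_nonneg_of_ae ?_
    filter_upwards [hfB] with x hx
    exact dualityPow_nonneg (sub_nonneg.2 (abs_le.1 hx).1)
  obtain ⟨c, hc, hc0⟩ := intermediate_value_Icc' (neg_le_self hB) hcont ⟨hright, hleft⟩
  exact ⟨c, abs_le.2 hc, hc0⟩

end DualityPow

section SetIntegral

theorem integrableOn_of_continuous_of_isBounded {X E : Type*} [PseudoMetricSpace X] [ProperSpace X]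
    [MeasurableSpace X] [OpensMeasurableSpace X] [NormedAddCommGroup E] {μ : Measure X}
    [IsFiniteMeasureOnCompacts μ] {f : X → E} (hf : Continuous f) {s : Set X} (hs : IsBounded s) :
    IntegrableOn f s μ :=
  (hf.continuousOn.integrableOn_compact' hs.isCompact_closure
    isClosed_closure.measurableSet).mono_set subset_closure

theorem integrableOn_norm_fderiv_rpow_of_lipschitzWith {E : Type*} [NormedAddCommGroup E]
    [NormedSpace ℝ E] [MeasurableSpace E] [OpensMeasurableSpace E] {μ : Measure E} {v : E → ℝ}
    {L : NNReal} (hv : LipschitzWith L v) {p : ℝ} (hp : 0 ≤ p) {s : Set E} (hs : μ s ≠ ⊤) :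
    IntegrableOn (fun x ↦ ‖fderiv ℝ v x‖ ^ p) s μ := by
  refine Measure.integrableOn_of_bounded (M := (L : ℝ) ^ p) hs
    ((measurable_fderiv ℝ v).norm.pow_const p).aestronglyMeasurable (.of_forall fun x ↦ ?_)
  rw [norm_of_nonneg (by positivity)]
  gcongr
  exact norm_fderiv_le_of_lipschitz ℝ hv

theorem setIntegral_norm_fderiv_rpow_le_of_lipschitzWith {E : Type*} [NormedAddCommGroup E]
    [NormedSpace ℝ E] [MeasurableSpace E] {μ : Measure E} {v : E → ℝ}
    {L : NNReal} (hv : LipschitzWith L v) {p : ℝ} (hp : 0 ≤ p) {s : Set E} (hs : μ s ≠ ⊤) :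
    ∫ x in s, ‖fderiv ℝ v x‖ ^ p ∂μ ≤ L ^ p * μ.real s := by
  refine (le_norm_self _).trans (norm_setIntegral_le_of_norm_le_const hs.lt_top fun x _ ↦ ?_)
  rw [norm_of_nonneg (by positivity)]
  gcongr
  exact norm_fderiv_le_of_lipschitz ℝ hv

theorem setIntegral_pos_of_isOpen_of_continuous {X : Type*} [TopologicalSpace X]
    [MeasurableSpace X] {μ : Measure X} [μ.IsOpenPosMeasure] {f : X → ℝ}
    (hf : Continuous f) (hf0 : ∀ x, 0 ≤ f x) {s : Set X} (hs : IsOpen s)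
    (hfs : IntegrableOn f s μ) (hne : ∃ x ∈ s, f x ≠ 0) : 0 < ∫ x in s, f x ∂μ := by
  obtain ⟨x, hx, hfx⟩ := hne
  rw [setIntegral_pos_iff_support_of_nonneg_ae (.of_forall hf0) hfs]
  exact (hf.isOpen_support.inter hs).measure_pos μ ⟨x, hfx, hx⟩

variable {α : Type*} [MeasurableSpace α] {μ : Measure α}

theorem mul_measureReal_le_setIntegral {s t : Set α} {f : α → ℝ} {δ : ℝ} (hs : MeasurableSet s)
    (ht : μ t ≠ ⊤) (hst : s ⊆ t) (hf : IntegrableOn f t μ) (hf0 : ∀ x, 0 ≤ f x)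
    (hδ : ∀ x ∈ s, δ ≤ f x) : δ * μ.real s ≤ ∫ x in t, f x ∂μ :=
  (setIntegral_ge_of_const_le_real hs (measure_ne_top_of_subset hst ht) hδ
    (hf.mono_set hst)).trans (setIntegral_mono_set hf (.of_forall hf0) hst.eventuallyLE)

theorem tendsto_setIntegral_of_ae_eventually_mem_iff {ι : Type*} {l : Filter ι}
    [l.IsCountablyGenerated] {E : Type*} [NormedAddCommGroup E] [NormedSpace ℝ E] {f : α → E}
    {s : ι → Set α} {t D : Set α} (hD : MeasurableSet D) (hf : IntegrableOn f D μ)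
    (hs : ∀ i, MeasurableSet (s i)) (hsD : ∀ i, s i ⊆ D) (ht : MeasurableSet t)
    (h : ∀ᵐ x ∂μ, ∀ᶠ i in l, (x ∈ s i ↔ x ∈ t)) :
    Tendsto (fun i ↦ ∫ x in s i, f x ∂μ) l (𝓝 (∫ x in t, f x ∂μ)) := by
  simp only [← integral_indicator, hs, ht]
  refine tendsto_integral_filter_of_dominated_convergence (D.indicator fun x ↦ ‖f x‖)
    (.of_forall fun i ↦ ((hf.mono_set (hsD i)).integrable_indicator (hs i)).aestronglyMeasurable)
    (.of_forall fun i ↦ .of_forall fun x ↦ ?_) ((integrable_indicator_iff hD).2 hf.norm) ?_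
  · rw [norm_indicator_eq_indicator_norm]
    exact indicator_le_indicator_of_subset (hsD i) (fun _ ↦ norm_nonneg _) x
  · filter_upwards [h] with x hx
    refine tendsto_nhds_of_eventually_eq ?_
    filter_upwards [hx] with i hi
    classical simp only [indicator, hi]

end SetIntegral

section Domain

/-- Nonempty open bounded convex sets, the admissible shapes of the optimization problem. -/
structure IsConvexDomain {E : Type*} [NormedAddCommGroup E] [NormedSpace ℝ E] (Ω : Set E) :
    Prop where
  isOpen : IsOpen Ω
  isBounded : IsBounded Ω
  convex : Convex ℝ Ω
  nonempty : Ω.Nonempty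

theorem IsConvexDomain.nontrivial {E : Type*} [NormedAddCommGroup E] [NormedSpace ℝ E]
    [Nontrivial E] {Ω : Set E} (hΩ : IsConvexDomain Ω) : Ω.Nontrivial := by
  obtain ⟨x, hx⟩ := hΩ.nonempty
  have : (𝓝[≠] x).NeBot := Module.punctured_nhds_neBot ℝ E x
  exact (infinite_of_mem_nhds x (hΩ.isOpen.mem_nhds hx)).nontrivial

end Domain

section NeumannTest

variable {N : ℕ} {p q : ℝ} {Ω : Set (EuclideanSpace ℝ (Fin N))}
  {v w : EuclideanSpace ℝ (Fin N) → ℝ}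

/-- The admissible functions in the variational definition of `muPQ p q Ω`: nontrivial Lipschitz
functions on `closure Ω` whose `q`-mean over `Ω` is zero. -/
structure IsNeumannTest (q : ℝ) (Ω : Set (EuclideanSpace ℝ (Fin N)))
    (v : EuclideanSpace ℝ (Fin N) → ℝ) : Prop where
  exists_lipschitzOnWith : ∃ K, LipschitzOnWith K v (closure Ω)
  exists_ne_zero : ∃ x ∈ Ω, v x ≠ 0
  integral_eq_zero : ∫ x in Ω, dualityPow q (v x) = 0

theorem muPQ_eq_sInf_image (p q : ℝ) (Ω : Set (EuclideanSpace ℝ (Fin N))) :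
    muPQ p q Ω = sInf (rayleighQuot p q Ω '' {v | IsNeumannTest q Ω v}) := by
  refine congrArg sInf (ext fun R ↦ ⟨?_, ?_⟩)
  · rintro ⟨v, K, hK, hne, hint, rfl⟩
    exact ⟨v, ⟨⟨K, hK⟩, hne, hint⟩, rfl⟩
  · rintro ⟨v, ⟨⟨K, hK⟩, hne, hint⟩, rfl⟩
    exact ⟨v, K, hK, hne, hint, rfl⟩

theorem rayleighQuot_nonneg (p q : ℝ) (Ω : Set (EuclideanSpace ℝ (Fin N)))
    (v : EuclideanSpace ℝ (Fin N) → ℝ) : 0 ≤ rayleighQuot p q Ω v :=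
  div_nonneg (integral_nonneg fun _ ↦ by positivity)
    (rpow_nonneg (integral_nonneg fun _ ↦ by positivity) _)

theorem muPQ_nonneg (p q : ℝ) (Ω : Set (EuclideanSpace ℝ (Fin N))) : 0 ≤ muPQ p q Ω := by
  rw [muPQ_eq_sInf_image]
  exact Real.sInf_nonneg (forall_mem_image.2 fun v _ ↦ rayleighQuot_nonneg p q Ω v)

theorem muPQ_le_rayleighQuot (p : ℝ) (hv : IsNeumannTest q Ω v) :
    muPQ p q Ω ≤ rayleighQuot p q Ω v := by
  rw [muPQ_eq_sInf_image]
  exact csInf_le ⟨0, forall_mem_image.2 fun v _ ↦ rayleighQuot_nonneg p q Ω v⟩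
    (mem_image_of_mem _ hv)

theorem rayleighQuot_congr (hΩ : IsOpen Ω) (h : EqOn v w Ω) :
    rayleighQuot p q Ω v = rayleighQuot p q Ω w := by
  have hgrad : ∀ x ∈ Ω, ‖fderiv ℝ v x‖ ^ p = ‖fderiv ℝ w x‖ ^ p := fun x hx ↦ by
    rw [(h.eventuallyEq_of_mem (hΩ.mem_nhds hx)).fderiv_eq]
  have hval : ∀ x ∈ Ω, |v x| ^ q = |w x| ^ q := fun x hx ↦ by rw [h hx]
  rw [rayleighQuot, rayleighQuot, setIntegral_congr_fun hΩ.measurableSet hgrad,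
    setIntegral_congr_fun hΩ.measurableSet hval]

theorem IsNeumannTest.exists_lipschitzWith_eqOn (hΩ : MeasurableSet Ω) (hv : IsNeumannTest q Ω v) :
    ∃ w, IsNeumannTest q Ω w ∧ (∃ L, LipschitzWith L w) ∧ EqOn v w Ω := by
  obtain ⟨⟨L, hL⟩, ⟨x, hx, hvx⟩, hint⟩ := hv
  obtain ⟨w, hw, hvw⟩ := hL.extend_real
  have hvw : EqOn v w Ω := hvw.mono subset_closure
  refine ⟨w, ⟨⟨L, hw.lipschitzOnWith⟩, ⟨x, hx, hvw hx ▸ hvx⟩, ?_⟩, ⟨L, hw⟩, hvw⟩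
  rw [← hint]
  exact setIntegral_congr_fun hΩ fun x hx ↦ by simp only [hvw hx]

theorem exists_integral_dualityPow_sub_eq_zero_of_continuous (hq : 1 < q) (hΩ : MeasurableSet Ω)
    (hb : IsBounded Ω) (hw : Continuous w) {B : ℝ} (hB : 0 ≤ B) (hwB : ∀ x ∈ Ω, |w x| ≤ B) :
    ∃ c, |c| ≤ B ∧ ∫ x in Ω, dualityPow q (w x - c) = 0 :=
  have : IsFiniteMeasure (volume.restrict Ω) := isFiniteMeasure_restrict.2 hb.measure_lt_top.ne
  exists_integral_dualityPow_sub_eq_zero hq hw.aestronglyMeasurable hB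
    (ae_restrict_of_forall_mem hΩ hwB)

theorem exists_isNeumannTest (hq : 1 < q) (hΩ : MeasurableSet Ω) (hb : IsBounded Ω)
    (hnt : Ω.Nontrivial) : ∃ v, IsNeumannTest q Ω v := by
  obtain ⟨x, hx, y, hy, hxy⟩ := hnt
  have hlip : LipschitzWith 1 fun z ↦ dist z x := .dist_left x
  obtain ⟨c, -, hc⟩ := exists_integral_dualityPow_sub_eq_zero_of_continuous hq hΩ hb
    hlip.continuous diam_nonneg fun z hz ↦ by
      rw [abs_of_nonneg dist_nonneg]
      exact dist_le_diam_of_mem hb hz hx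
  refine ⟨fun z ↦ dist z x - c, ⟨_, (hlip.sub (.const c)).lipschitzOnWith⟩, ?_, hc⟩
  by_contra! h
  exact hxy (dist_eq_zero.1 (by linarith [h x hx, h y hy, dist_self x, dist_comm x y]))

theorem exists_muPQ_mul_rpow_le (hp : 0 < p) (hq : 1 < q) (hΩ : MeasurableSet Ω)
    (hb : IsBounded Ω) {L : NNReal} (hw : LipschitzWith L w) {B : ℝ} (hB : 0 ≤ B)
    (hwB : ∀ x ∈ Ω, |w x| ≤ B) :
    ∃ c, |c| ≤ B ∧ muPQ p q Ω * (∫ x in Ω, |w x - c| ^ q) ^ (p / q) ≤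
      ∫ x in Ω, ‖fderiv ℝ w x‖ ^ p := by
  obtain ⟨c, hcB, hc⟩ := exists_integral_dualityPow_sub_eq_zero_of_continuous hq hΩ hb
    hw.continuous hB hwB
  refine ⟨c, hcB, ?_⟩
  by_cases hne : ∃ x ∈ Ω, w x - c ≠ 0
  · have htest : IsNeumannTest q Ω fun x ↦ w x - c :=
      ⟨⟨_, (hw.sub (.const c)).lipschitzOnWith⟩, hne, hc⟩
    have h := muPQ_le_rayleighQuot p htest
    simp only [rayleighQuot, fderiv_sub_const] at h
    exact mul_le_of_le_div₀ (integral_nonneg fun _ ↦ by positivity) (by positivity) h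
  · push Not at hne
    have hzero : ∫ x in Ω, |w x - c| ^ q = 0 :=
      setIntegral_eq_zero_of_forall_eq_zero fun x hx ↦ by
        simp [hne x hx, (zero_lt_one.trans hq).ne']
    rw [hzero, zero_rpow (by positivity), mul_zero]
    positivity

end NeumannTest

section Scaling

theorem setIntegral_preimage_add_smul {E F : Type*} [NormedAddCommGroup E] [NormedSpace ℝ E]
    [FiniteDimensional ℝ E] [MeasurableSpace E] [BorelSpace E] {μ : Measure E}
    [μ.IsAddHaarMeasure] [NormedAddCommGroup F] [NormedSpace ℝ F] {s : Set E}
    (hs : MeasurableSet s) (x₀ : E) {d : ℝ} (hd : 0 ≤ d) (f : E → F) :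
    ∫ x in (fun x ↦ x₀ + d • x) ⁻¹' s, f (x₀ + d • x) ∂μ =
      (d ^ Module.finrank ℝ E)⁻¹ • ∫ x in s, f x ∂μ := by
  have hT : Measurable fun x : E ↦ x₀ + d • x := by fun_prop
  rw [← integral_indicator hs, ← integral_indicator (hT hs)]
  calc ∫ x, ((fun x ↦ x₀ + d • x) ⁻¹' s).indicator (fun x ↦ f (x₀ + d • x)) x ∂μ
      = ∫ x, (fun y ↦ s.indicator f (x₀ + y)) (d • x) ∂μ := rfl
    _ = (d ^ Module.finrank ℝ E)⁻¹ • ∫ y, s.indicator f (x₀ + y) ∂μ :=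
        Measure.integral_comp_smul_of_nonneg μ (fun y ↦ s.indicator f (x₀ + y)) d (hR := hd)
    _ = (d ^ Module.finrank ℝ E)⁻¹ • ∫ y, s.indicator f y ∂μ := by
        rw [integral_add_left_eq_self]

theorem norm_fderiv_comp_add_smul {E F : Type*} [NormedAddCommGroup E] [NormedSpace ℝ E]
    [NormedAddCommGroup F] [NormedSpace ℝ F] (v : E → F) (x₀ : E) {d : ℝ} (hd : 0 ≤ d) (x : E) :
    ‖fderiv ℝ (fun x ↦ v (x₀ + d • x)) x‖ = d * ‖fderiv ℝ v (x₀ + d • x)‖ := by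
  rw [fderiv_comp_smul (f := fun y ↦ v (x₀ + y)), norm_smul, norm_of_nonneg hd,
    fderiv_comp_add_left]

variable {N : ℕ} {p q : ℝ} {Ω : Set (EuclideanSpace ℝ (Fin N))}
  {v : EuclideanSpace ℝ (Fin N) → ℝ} {d : ℝ}

theorem rayleighQuot_comp_add_smul (hΩ : MeasurableSet Ω) (x₀ : EuclideanSpace ℝ (Fin N))
    (hd : 0 < d) : rayleighQuot p q ((fun x ↦ x₀ + d • x) ⁻¹' Ω) (fun x ↦ v (x₀ + d • x)) =
      d ^ (p + N * p / q - N) * rayleighQuot p q Ω v := by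
  have hnum : ∫ x in (fun x ↦ x₀ + d • x) ⁻¹' Ω, ‖fderiv ℝ (fun x ↦ v (x₀ + d • x)) x‖ ^ p =
      d ^ (p - N) * ∫ x in Ω, ‖fderiv ℝ v x‖ ^ p := by
    simp only [norm_fderiv_comp_add_smul v x₀ hd.le, mul_rpow hd.le (norm_nonneg _)]
    rw [setIntegral_preimage_add_smul hΩ x₀ hd.le fun y ↦ d ^ p * ‖fderiv ℝ v y‖ ^ p,
      integral_const_mul, finrank_euclideanSpace_fin, rpow_sub hd, rpow_natCast, smul_eq_mul]
    ring
  have hden : ∫ x in (fun x ↦ x₀ + d • x) ⁻¹' Ω, |v (x₀ + d • x)| ^ q =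
      d ^ (-N : ℝ) * ∫ x in Ω, |v x| ^ q := by
    rw [setIntegral_preimage_add_smul hΩ x₀ hd.le fun y ↦ |v y| ^ q,
      finrank_euclideanSpace_fin, rpow_neg hd.le, rpow_natCast, smul_eq_mul]
  rw [rayleighQuot, rayleighQuot, hnum, hden, mul_rpow (by positivity)
    (integral_nonneg fun _ ↦ by positivity), ← rpow_mul hd.le, mul_div_mul_comm, ← rpow_sub hd]
  ring_nf

theorem IsNeumannTest.comp_add_smul (hv : IsNeumannTest q Ω v) (hΩ : MeasurableSet Ω)
    (x₀ : EuclideanSpace ℝ (Fin N)) (hd : 0 < d) :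
    IsNeumannTest q ((fun x ↦ x₀ + d • x) ⁻¹' Ω) (fun x ↦ v (x₀ + d • x)) := by
  obtain ⟨⟨K, hK⟩, ⟨y, hy, hvy⟩, hint⟩ := hv
  have hT : LipschitzWith (0 + ‖d‖₊) fun x : EuclideanSpace ℝ (Fin N) ↦ x₀ + d • x :=
    (LipschitzWith.const x₀).add (lipschitzWith_smul d)
  refine ⟨⟨_, hK.comp hT.lipschitzOnWith ((mapsTo_preimage _ Ω).closure hT.continuous)⟩,
    ⟨d⁻¹ • (y - x₀), ?_, ?_⟩, ?_⟩
  · simpa [smul_inv_smul₀ hd.ne'] using hy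
  · simpa [smul_inv_smul₀ hd.ne'] using hvy
  · rw [setIntegral_preimage_add_smul hΩ x₀ hd.le fun y ↦ dualityPow q (v y), hint, smul_zero]

theorem muPQ_preimage_add_smul (hΩ : MeasurableSet Ω) (x₀ : EuclideanSpace ℝ (Fin N))
    (hd : 0 < d) :
    muPQ p q ((fun x ↦ x₀ + d • x) ⁻¹' Ω) = d ^ (p + N * p / q - N) * muPQ p q Ω := by
  have hT : Measurable fun x : EuclideanSpace ℝ (Fin N) ↦ x₀ + d • x := by fun_prop
  rw [muPQ_eq_sInf_image, muPQ_eq_sInf_image, ← smul_eq_mul,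
    ← Real.sInf_smul_of_nonneg (by positivity), ← image_smul, image_image]
  refine congrArg sInf (Subset.antisymm ?_ ?_)
  · rintro _ ⟨u, hu, rfl⟩
    have htest := hu.comp_add_smul (hT hΩ) (-(d⁻¹ • x₀)) (inv_pos.2 hd)
    have hcancel : ∀ x : EuclideanSpace ℝ (Fin N), x₀ + d • (-(d⁻¹ • x₀) + d⁻¹ • x) = x :=
      fun x ↦ by simp [smul_smul, hd.ne']
    have hcancel' : ∀ x : EuclideanSpace ℝ (Fin N), -(d⁻¹ • x₀) + d⁻¹ • (x₀ + d • x) = x :=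
      fun x ↦ by simp [smul_smul, hd.ne']
    simp only [← preimage_comp, Function.comp_def, hcancel, preimage_id'] at htest
    refine ⟨_, htest, ?_⟩
    simp only [smul_eq_mul, ← rayleighQuot_comp_add_smul hΩ x₀ hd, hcancel']
  · rintro _ ⟨v, hv, rfl⟩
    exact ⟨_, hv.comp_add_smul hΩ x₀ hd, rayleighQuot_comp_add_smul hΩ x₀ hd⟩

end Scaling

section Normalization

open scoped Pointwise

variable {E : Type*} [NormedAddCommGroup E] [NormedSpace ℝ E] {d : ℝ}

theorem preimage_add_smul (x₀ : E) (hd : d ≠ 0) (s : Set E) :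
    (fun x ↦ x₀ + d • x) ⁻¹' s = d⁻¹ • (IsometryEquiv.addLeft x₀ ⁻¹' s) := by
  rw [← preimage_smul₀ hd]
  rfl

theorem diam_preimage_add_smul (x₀ : E) (hd : 0 < d) (s : Set E) :
    diam ((fun x ↦ x₀ + d • x) ⁻¹' s) = d⁻¹ * diam s := by
  rw [preimage_add_smul x₀ hd.ne', diam_smul₀, IsometryEquiv.diam_preimage,
    norm_of_nonneg (by positivity)]

theorem IsConvexDomain.preimage {Ω : Set E} (hΩ : IsConvexDomain Ω) (x₀ : E)
    (hd : d ≠ 0) : IsConvexDomain ((fun x ↦ x₀ + d • x) ⁻¹' Ω) where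
  isOpen := hΩ.isOpen.preimage (by fun_prop)
  isBounded := by
    rw [preimage_add_smul x₀ hd]
    exact ((IsometryEquiv.addLeft x₀).isometry.antilipschitz.isBounded_preimage
      hΩ.isBounded).smul₀ _
  convex := (hΩ.convex.translate_preimage_right x₀).smul_preimage d
  nonempty := by
    obtain ⟨x, hx⟩ := hΩ.nonempty
    exact ⟨d⁻¹ • (x - x₀), by simpa [smul_inv_smul₀ hd] using hx⟩

/-- Convex domains of unit diameter containing the origin. Every convex domain is brought to this
form by a translation and a dilation. -/
structure IsNormalizedDomain (Ω : Set E) : Prop extends IsConvexDomain Ω where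
  diam_eq_one : diam Ω = 1
  zero_mem : 0 ∈ Ω

theorem IsNormalizedDomain.subset_closedBall {Ω : Set E} (hΩ : IsNormalizedDomain Ω) :
    Ω ⊆ closedBall 0 1 := fun _ hx ↦
  mem_closedBall.2 (hΩ.diam_eq_one ▸ dist_le_diam_of_mem hΩ.isBounded hx hΩ.zero_mem)

/-- The functional `μ_{p,q}(Ω) · diam(Ω) ^ (p + Np/q - N)` to be maximized. -/
noncomputable def scaledMuPQ {N : ℕ} (p q : ℝ) (Ω : Set (EuclideanSpace ℝ (Fin N))) : ℝ :=
  muPQ p q Ω * diam Ω ^ (p + N * p / q - N)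

theorem scaledMuPQ_of_diam_eq_one {N : ℕ} (p q : ℝ) {Ω : Set (EuclideanSpace ℝ (Fin N))}
    (hΩ : diam Ω = 1) : scaledMuPQ p q Ω = muPQ p q Ω := by
  rw [scaledMuPQ, hΩ, one_rpow, mul_one]

theorem scaledMuPQ_nonneg {N : ℕ} (p q : ℝ) (Ω : Set (EuclideanSpace ℝ (Fin N))) :
    0 ≤ scaledMuPQ p q Ω :=
  mul_nonneg (muPQ_nonneg p q Ω) (rpow_nonneg diam_nonneg _)

theorem IsConvexDomain.exists_isNormalizedDomain {N : ℕ} [NeZero N]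
    {Ω : Set (EuclideanSpace ℝ (Fin N))} (hΩ : IsConvexDomain Ω) (p q : ℝ) :
    ∃ Ω' : Set (EuclideanSpace ℝ (Fin N)), IsNormalizedDomain Ω' ∧
      scaledMuPQ p q Ω = muPQ p q Ω' := by
  obtain ⟨x₀, hx₀⟩ := hΩ.nonempty
  have hd : 0 < diam Ω := diam_pos hΩ.nontrivial hΩ.isBounded
  refine ⟨_, ⟨hΩ.preimage x₀ hd.ne', ?_, ?_⟩, ?_⟩
  · rw [diam_preimage_add_smul x₀ hd, inv_mul_cancel₀ hd.ne']
  · simpa using hx₀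
  · rw [muPQ_preimage_add_smul hΩ.isOpen.measurableSet x₀ hd, scaledMuPQ, mul_comm]

end Normalization

section UpperBound

theorem exists_mul_diam_le_dist {X : Type*} [PseudoMetricSpace X] {s : Set X} (hs : s.Nonempty)
    {c : ℝ} (hc : c < 1) : ∃ x ∈ s, ∃ y ∈ s, c * diam s ≤ dist x y := by
  by_contra! h
  obtain ⟨x, hx⟩ := hs
  have hpos : 0 < c * diam s := dist_nonneg.trans_lt (h x hx x hx)
  have hle : diam s ≤ c * diam s :=
    diam_le_of_forall_dist_le hpos.le fun x hx y hy ↦ (h x hx y hy).le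
  have hd : 0 < diam s := diam_nonneg.lt_of_ne' fun h0 ↦ by simp [h0] at hpos
  exact hle.not_gt (mul_lt_of_lt_one_left hd hc)

theorem IsConvexDomain.exists_isOpen_subset_closedBall {E : Type*} [NormedAddCommGroup E]
    [NormedSpace ℝ E] [FiniteDimensional ℝ E] [MeasurableSpace E] [BorelSpace E] (μ : Measure E)
    [μ.IsAddHaarMeasure] {Ω : Set E} (hΩ : IsConvexDomain Ω) {x : E} (hx : x ∈ Ω) {t : ℝ}
    (ht : 0 < t) (ht1 : t ≤ 1) : ∃ S ⊆ Ω, IsOpen S ∧ S ⊆ closedBall x (t * diam Ω) ∧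
      μ.real S = t ^ Module.finrank ℝ E * μ.real Ω := by
  refine ⟨AffineMap.homothety x t '' Ω, ?_,
    AffineMap.homothety_isOpenMap x t ht.ne' _ hΩ.isOpen, ?_, ?_⟩
  · rintro _ ⟨z, hz, rfl⟩
    rw [AffineMap.homothety_eq_lineMap]
    exact hΩ.convex.lineMap_mem hx hz ⟨ht.le, ht1⟩
  · rintro _ ⟨z, hz, rfl⟩
    rw [AffineMap.homothety_eq_lineMap, mem_closedBall, dist_lineMap_left, norm_of_nonneg ht.le]
    gcongr
    exact dist_le_diam_of_mem hΩ.isBounded hx hz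
  · rw [measureReal_def, Measure.addHaar_image_homothety, ENNReal.toReal_mul,
      ENNReal.toReal_ofReal (abs_nonneg _), abs_of_pos (by positivity), measureReal_def]

/-- The distance to one end of a near-diameter of `Ω` cannot be close to the same constant at both
ends. -/
theorem IsConvexDomain.exists_le_setIntegral_abs_dist_sub_rpow {E : Type*} [NormedAddCommGroup E]
    [NormedSpace ℝ E] [FiniteDimensional ℝ E] [MeasurableSpace E] [BorelSpace E] (μ : Measure E)
    [μ.IsAddHaarMeasure] {Ω : Set E} (hΩ : IsConvexDomain Ω) {q : ℝ} (hq : 0 ≤ q) :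
    ∃ x ∈ Ω, ∀ c, (diam Ω / 8) ^ q * ((1 / 4) ^ Module.finrank ℝ E * μ.real Ω) ≤
      ∫ z in Ω, |dist z x - c| ^ q ∂μ := by
  obtain ⟨x, hx, y, hy, hxy⟩ :=
    exists_mul_diam_le_dist hΩ.nonempty (c := 3 / 4) (by norm_num)
  refine ⟨x, hx, fun c ↦ ?_⟩
  obtain ⟨a, ha, hac⟩ : ∃ a ∈ Ω, ∀ z ∈ closedBall a (1 / 4 * diam Ω),
      diam Ω / 8 ≤ |dist z x - c| := by
    rcases le_total (3 / 8 * diam Ω) c with hc | hc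
    · refine ⟨x, hx, fun z hz ↦ ?_⟩
      rw [abs_sub_comm]
      exact le_trans (by linarith [mem_closedBall.1 hz]) (le_abs_self _)
    · refine ⟨y, hy, fun z hz ↦ ?_⟩
      have htri := dist_triangle_left x y z
      exact le_trans (by linarith [mem_closedBall.1 hz]) (le_abs_self _)
  obtain ⟨S, hSΩ, hSo, hSa, hSμ⟩ :=
    hΩ.exists_isOpen_subset_closedBall μ ha (t := 1 / 4) (by norm_num) (by norm_num)
  have hcont : Continuous fun z ↦ |dist z x - c| ^ q :=
    Continuous.rpow_const (by fun_prop) fun _ ↦ .inr hq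
  rw [← hSμ]
  refine mul_measureReal_le_setIntegral hSo.measurableSet hΩ.isBounded.measure_lt_top.ne hSΩ
    (integrableOn_of_continuous_of_isBounded hcont hΩ.isBounded) (fun _ ↦ by positivity)
    fun z hz ↦ ?_
  gcongr
  exact hac z (hSa hz)

variable {N : ℕ} {p q : ℝ} {Ω : Set (EuclideanSpace ℝ (Fin N))}

theorem IsConvexDomain.muPQ_mul_rpow_le (hΩ : IsConvexDomain Ω) (hp : 0 < p) (hq : 1 < q) :
    muPQ p q Ω * ((diam Ω / 8) ^ q * ((1 / 4) ^ N * volume.real Ω)) ^ (p / q) ≤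
      volume.real Ω := by
  obtain ⟨x, hx, hxc⟩ :=
    hΩ.exists_le_setIntegral_abs_dist_sub_rpow volume (zero_lt_one.trans hq).le
  have hlip : LipschitzWith 1 fun z ↦ dist z x := .dist_left x
  obtain ⟨c, -, hc⟩ := exists_muPQ_mul_rpow_le hp hq hΩ.isOpen.measurableSet hΩ.isBounded hlip
    diam_nonneg fun z hz ↦ by
      rw [abs_of_nonneg dist_nonneg]
      exact dist_le_diam_of_mem hΩ.isBounded hz hx
  have hmu := muPQ_nonneg p q Ω
  calc muPQ p q Ω * ((diam Ω / 8) ^ q * ((1 / 4) ^ N * volume.real Ω)) ^ (p / q)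
      ≤ muPQ p q Ω * (∫ z in Ω, |dist z x - c| ^ q) ^ (p / q) := by
        gcongr
        simpa only [finrank_euclideanSpace_fin] using hxc c
    _ ≤ ∫ z in Ω, ‖fderiv ℝ (fun z ↦ dist z x) z‖ ^ p := hc
    _ ≤ volume.real Ω := by
        simpa using setIntegral_norm_fderiv_rpow_le_of_lipschitzWith hlip hp.le
          hΩ.isBounded.measure_lt_top.ne

/-- The factor in the bound `μ_{p,q}(Ω) ≤ C |Ω| ^ (1 - p / q)` for domains of unit diameter. -/
noncomputable def muPQBound (N : ℕ) (p q : ℝ) : ℝ :=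
  (((1 / 8) ^ q * (1 / 4) ^ N) ^ (p / q))⁻¹

theorem IsConvexDomain.muPQ_le (hΩ : IsConvexDomain Ω) (hd : diam Ω = 1) (hp : 0 < p)
    (hq : 1 < q) : muPQ p q Ω ≤ muPQBound N p q * volume.real Ω ^ (1 - p / q) := by
  have hV : 0 < volume.real Ω := ENNReal.toReal_pos
    (hΩ.isOpen.measure_pos volume hΩ.nonempty).ne' hΩ.isBounded.measure_lt_top.ne
  have h := hΩ.muPQ_mul_rpow_le hp hq
  rw [hd, ← mul_assoc ((1 / 8 : ℝ) ^ q), mul_rpow (by positivity) hV.le, ← mul_assoc,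
    ← le_div_iff₀ (by positivity)] at h
  rw [muPQBound, inv_mul_eq_div, le_div_iff₀ (by positivity), rpow_sub hV, rpow_one]
  exact h

end UpperBound

section UpperSemicontinuity

theorem setIntegral_abs_rpow_le_add {X : Type*} [PseudoMetricSpace X] [ProperSpace X]
    [MeasurableSpace X] [OpensMeasurableSpace X] {μ : Measure X} [IsFiniteMeasureOnCompacts μ]
    {s : Set X} (hs : IsBounded s) {w : X → ℝ} (hw : Continuous w) {q : ℝ} (hq : 1 < q) (c : ℝ) :
    ∫ x in s, |w x| ^ q ∂μ ≤
      ∫ x in s, |w x - c| ^ q ∂μ + q * c * ∫ x in s, dualityPow q (w x) ∂μ := by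
  have hint : ∀ a, IntegrableOn (fun x ↦ |w x - a| ^ q) s μ := fun a ↦
    integrableOn_of_continuous_of_isBounded
      (Continuous.rpow_const (by fun_prop) fun _ ↦ .inr (zero_lt_one.trans hq).le) hs
  have hduality : IntegrableOn (fun x ↦ q * c * dualityPow q (w x)) s μ :=
    (integrableOn_of_continuous_of_isBounded ((continuous_dualityPow hq).comp hw) hs).const_mul _
  rw [← integral_const_mul, ← integral_add (hint c) hduality]
  have hint0 : IntegrableOn (fun x ↦ |w x| ^ q) s μ := by simpa using hint 0
  exact integral_mono hint0 ((hint c).add hduality) fun x ↦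
    abs_rpow_le_abs_sub_rpow_add hq (w x) c

variable {N : ℕ} {p q : ℝ} {w : EuclideanSpace ℝ (Fin N) → ℝ}

/-- By the tangent line inequality, recentring `w` by a constant `c` with `|c| ≤ B` lowers the
integral of `|w| ^ q` by at most the subtracted term, which vanishes if `w` is already centred. -/
theorem muPQ_mul_max_rpow_le {Ω : Set (EuclideanSpace ℝ (Fin N))} (hp : 0 < p) (hq : 1 < q)
    (hΩ : MeasurableSet Ω) (hb : IsBounded Ω) {L : NNReal} (hw : LipschitzWith L w) {B : ℝ}
    (hB : 0 ≤ B) (hwB : ∀ x ∈ Ω, |w x| ≤ B) :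
    muPQ p q Ω *
        max ((∫ x in Ω, |w x| ^ q) - q * B * |∫ x in Ω, dualityPow q (w x)|) 0 ^ (p / q) ≤
      ∫ x in Ω, ‖fderiv ℝ w x‖ ^ p := by
  obtain ⟨c, hcB, hc⟩ := exists_muPQ_mul_rpow_le hp hq hΩ hb hw hB hwB
  have hq0 : 0 < q := zero_lt_one.trans hq
  have hmu := muPQ_nonneg p q Ω
  refine le_trans ?_ hc
  gcongr
  refine max_le ?_ (integral_nonneg fun _ ↦ by positivity)
  have hcost : q * c * ∫ x in Ω, dualityPow q (w x) ≤
      q * B * |∫ x in Ω, dualityPow q (w x)| := by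
    rw [mul_assoc, mul_assoc]
    refine mul_le_mul_of_nonneg_left ((le_abs_self _).trans ?_) hq0.le
    rw [abs_mul]
    gcongr
  linarith [setIntegral_abs_rpow_le_add (μ := volume) hb hw.continuous hq c]

variable {ι : Type*} {l : Filter ι} [l.NeBot] [l.IsCountablyGenerated]
  {Ω : ι → Set (EuclideanSpace ℝ (Fin N))} {K D : Set (EuclideanSpace ℝ (Fin N))} {M : ℝ}

theorem mul_rpow_le_of_tendsto_muPQ (hp : 0 < p) (hq : 1 < q) (hΩ : ∀ i, MeasurableSet (Ω i))
    (hD : IsCompact D) (hΩD : ∀ i, Ω i ⊆ D) (hK : MeasurableSet K)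
    (hlim : ∀ᵐ x, ∀ᶠ i in l, (x ∈ Ω i ↔ x ∈ K))
    (hM : Tendsto (fun i ↦ muPQ p q (Ω i)) l (𝓝 M)) {L : NNReal} (hw : LipschitzWith L w)
    (hwK : ∫ x in K, dualityPow q (w x) = 0) :
    M * (∫ x in K, |w x| ^ q) ^ (p / q) ≤ ∫ x in K, ‖fderiv ℝ w x‖ ^ p := by
  have hq0 : 0 < q := zero_lt_one.trans hq
  have tendsto_setIntegral : ∀ f : EuclideanSpace ℝ (Fin N) → ℝ, IntegrableOn f D →
      Tendsto (fun i ↦ ∫ x in Ω i, f x) l (𝓝 (∫ x in K, f x)) := fun f hf ↦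
    tendsto_setIntegral_of_ae_eventually_mem_iff hD.measurableSet hf hΩ hΩD hK hlim
  have hgrad := tendsto_setIntegral _ (integrableOn_norm_fderiv_rpow_of_lipschitzWith hw hp.le
    hD.measure_lt_top.ne)
  have hnorm := tendsto_setIntegral (fun x ↦ |w x| ^ q) (integrableOn_of_continuous_of_isBounded
    (hw.continuous.abs.rpow_const fun _ ↦ .inr hq0.le) hD.isBounded)
  have hmean := tendsto_setIntegral (fun x ↦ dualityPow q (w x))
    (integrableOn_of_continuous_of_isBounded ((continuous_dualityPow hq).comp hw.continuous)
      hD.isBounded)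
  obtain ⟨B, hB⟩ := hD.exists_bound_of_continuousOn hw.continuous.continuousOn
  have hden : Tendsto (fun i ↦ max ((∫ x in Ω i, |w x| ^ q) -
      q * max B 0 * |∫ x in Ω i, dualityPow q (w x)|) 0 ^ (p / q)) l
      (𝓝 ((∫ x in K, |w x| ^ q) ^ (p / q))) := by
    have hK0 : 0 ≤ ∫ x in K, |w x| ^ q := integral_nonneg fun _ ↦ by positivity
    have h := ((hnorm.sub (hmean.abs.const_mul (q * max B 0))).max
      (tendsto_const_nhds (x := (0 : ℝ)))).rpow_const (p := p / q) (.inr (by positivity))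
    simpa only [hwK, abs_zero, mul_zero, sub_zero, max_eq_left hK0] using h
  exact le_of_tendsto_of_tendsto' (hM.mul hden) hgrad fun i ↦
    muPQ_mul_max_rpow_le hp hq (hΩ i) (hD.isBounded.subset (hΩD i)) hw (le_max_right B 0)
      fun x hx ↦ (hB x (hΩD i hx)).trans (le_max_left B 0)

theorem le_muPQ_of_tendsto (hp : 0 < p) (hq : 1 < q) (hΩ : ∀ i, MeasurableSet (Ω i))
    (hD : IsCompact D) (hΩD : ∀ i, Ω i ⊆ D) (hK : IsOpen K) (hKD : K ⊆ D) (hKnt : K.Nontrivial)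
    (hlim : ∀ᵐ x, ∀ᶠ i in l, (x ∈ Ω i ↔ x ∈ K))
    (hM : Tendsto (fun i ↦ muPQ p q (Ω i)) l (𝓝 M)) : M ≤ muPQ p q K := by
  have hKb : IsBounded K := hD.isBounded.subset hKD
  rw [muPQ_eq_sInf_image]
  refine le_csInf (Set.Nonempty.image _ (exists_isNeumannTest hq hK.measurableSet hKb hKnt))
    (forall_mem_image.2 fun v hv ↦ ?_)
  obtain ⟨w, hw, ⟨L, hL⟩, hvw⟩ := hv.exists_lipschitzWith_eqOn hK.measurableSet
  have hcont : Continuous fun x ↦ |w x| ^ q :=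
    hL.continuous.abs.rpow_const fun _ ↦ .inr (zero_lt_one.trans hq).le
  have hpos : 0 < ∫ x in K, |w x| ^ q := by
    refine setIntegral_pos_of_isOpen_of_continuous hcont (fun _ ↦ by positivity) hK
      (integrableOn_of_continuous_of_isBounded hcont hKb) ?_
    obtain ⟨x, hx, hwx⟩ := hw.exists_ne_zero
    exact ⟨x, hx, by positivity⟩
  rw [rayleighQuot_congr hK hvw, rayleighQuot, le_div_iff₀ (by positivity)]
  exact mul_rpow_le_of_tendsto_muPQ hp hq hΩ hD hΩD hK.measurableSet hlim hM hL
    hw.integral_eq_zero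

end UpperSemicontinuity

section Existence

variable {N : ℕ} {p q : ℝ}

theorem bddAbove_muPQ_image_isNormalizedDomain (hp : 0 < p) (hpq : p < q) (hq : 1 < q) :
    BddAbove (muPQ p q '' {Ω : Set (EuclideanSpace ℝ (Fin N)) | IsNormalizedDomain Ω}) := by
  have hexp : 0 ≤ 1 - p / q := sub_nonneg.2 ((div_le_one (hp.trans hpq)).2 hpq.le)
  refine ⟨muPQBound N p q *
    volume.real (closedBall (0 : EuclideanSpace ℝ (Fin N)) 1) ^ (1 - p / q),
    forall_mem_image.2 fun Ω hΩ ↦ (hΩ.muPQ_le hΩ.diam_eq_one hp hq).trans ?_⟩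
  rw [muPQBound]
  gcongr
  exacts [measure_closedBall_lt_top.ne, hΩ.subset_closedBall]

variable {Ω : ℕ → Set (EuclideanSpace ℝ (Fin N))} {C : Set (EuclideanSpace ℝ (Fin N))} {M : ℝ}

theorem le_muPQBound_mul_of_tendsto (hp : 0 < p) (hpq : p < q) (hq : 1 < q)
    (hΩ : ∀ n, IsNormalizedDomain (Ω n)) (hC : MeasurableSet C)
    (hlim : ∀ᵐ x, ∀ᶠ n in atTop, (x ∈ Ω n ↔ x ∈ C))
    (hM : Tendsto (fun n ↦ muPQ p q (Ω n)) atTop (𝓝 M)) :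
    M ≤ muPQBound N p q * volume.real C ^ (1 - p / q) := by
  have hexp : 0 ≤ 1 - p / q := sub_nonneg.2 ((div_le_one (hp.trans hpq)).2 hpq.le)
  have hvol : Tendsto (fun n ↦ volume.real (Ω n)) atTop (𝓝 (volume.real C)) := by
    simpa using tendsto_setIntegral_of_ae_eventually_mem_iff (f := fun _ ↦ (1 : ℝ))
      measurableSet_closedBall (integrableOn_const (measure_closedBall_lt_top (x := 0) (r := 1)).ne)
      (fun n ↦ (hΩ n).isOpen.measurableSet) (fun n ↦ (hΩ n).subset_closedBall) hC hlim
  exact le_of_tendsto_of_tendsto' hM ((hvol.rpow_const (.inr hexp)).const_mul _)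
    fun n ↦ (hΩ n).muPQ_le (hΩ n).diam_eq_one hp hq

theorem exists_isConvexDomain_le_muPQ_of_tendsto [NeZero N] (hp : 0 < p) (hpq : p < q)
    (hq : 1 < q) (hΩ : ∀ n, IsNormalizedDomain (Ω n)) (hM0 : 0 < M)
    (hM : Tendsto (fun n ↦ muPQ p q (Ω n)) atTop (𝓝 M)) :
    ∃ K : Set (EuclideanSpace ℝ (Fin N)), IsConvexDomain K ∧ diam K = 1 ∧ M ≤ muPQ p q K := by
  obtain ⟨C, hCD, hCc, hCconv, φ, hφ, hC⟩ :=
    blaschke_selection (isCompact_closedBall (0 : EuclideanSpace ℝ (Fin N)) 1)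
      (fun n ↦ (hΩ n).convex) (fun n ↦ (hΩ n).nonempty) fun n ↦ (hΩ n).subset_closedBall
  have hlim := ae_eventually_mem_iff_mem_interior volume (fun n ↦ (hΩ (φ n)).convex)
    (fun n ↦ (hΩ (φ n)).isOpen) hCconv hC
  have hMφ := hM.comp hφ.tendsto_atTop
  have hne : (interior C).Nonempty := by
    by_contra hempty
    have hle := le_muPQBound_mul_of_tendsto hp hpq hq (fun n ↦ hΩ (φ n))
      isOpen_interior.measurableSet hlim hMφ
    have hexp : 1 - p / q ≠ 0 := sub_ne_zero.2 ((div_lt_one (hp.trans hpq)).2 hpq).ne'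
    rw [not_nonempty_iff_eq_empty.1 hempty, measureReal_empty, zero_rpow hexp, mul_zero] at hle
    exact hle.not_gt hM0
  have hdiam : diam (interior C) = 1 := by
    have hdiamC : Tendsto (fun n ↦ diam (Ω (φ n))) atTop (𝓝 (diam C)) :=
      tendsto_diam_of_tendsto_hausdorffEDist hCc.isBounded hC
    simp only [fun n ↦ (hΩ (φ n)).diam_eq_one, tendsto_const_nhds_iff] at hdiamC
    rw [← diam_closure, hCconv.closure_interior_eq_closure_of_nonempty_interior hne,
      diam_closure, hdiamC]
  have hK : IsConvexDomain (interior C) :=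
    ⟨isOpen_interior, hCc.isBounded.subset interior_subset, hCconv.interior, hne⟩
  exact ⟨interior C, hK, hdiam, le_muPQ_of_tendsto hp hq (fun n ↦ (hΩ (φ n)).isOpen.measurableSet)
    (isCompact_closedBall 0 1) (fun n ↦ (hΩ (φ n)).subset_closedBall) isOpen_interior
    (interior_subset.trans hCD) hK.nontrivial hlim hMφ⟩

theorem exists_isMaxOn_scaledMuPQ [NeZero N] (hp : 0 < p) (hpq : p < q) (hq : 1 < q) :
    ∃ K : Set (EuclideanSpace ℝ (Fin N)), IsConvexDomain K ∧
      IsMaxOn (scaledMuPQ p q) {Ω | IsConvexDomain Ω} K := by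
  set S : Set ℝ := muPQ p q '' {Ω : Set (EuclideanSpace ℝ (Fin N)) | IsNormalizedDomain Ω}
  have hbdd : BddAbove S := bddAbove_muPQ_image_isNormalizedDomain hp hpq hq
  have hball : IsConvexDomain (ball (0 : EuclideanSpace ℝ (Fin N)) 1) :=
    ⟨isOpen_ball, isBounded_ball, convex_ball 0 1, nonempty_ball.2 one_pos⟩
  have hle : ∀ {Ω : Set (EuclideanSpace ℝ (Fin N))}, IsConvexDomain Ω →
      scaledMuPQ p q Ω ≤ sSup S := fun hΩ ↦ by
    obtain ⟨Ω', hΩ', heq⟩ := hΩ.exists_isNormalizedDomain p q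
    exact heq ▸ le_csSup hbdd (mem_image_of_mem _ hΩ')
  rcases le_or_gt (sSup S) 0 with hS0 | hS0
  · exact ⟨_, hball, fun Ω hΩ ↦ ((hle hΩ).trans hS0).trans (scaledMuPQ_nonneg p q _)⟩
  obtain ⟨Ω₀, hΩ₀, -⟩ := hball.exists_isNormalizedDomain p q
  obtain ⟨u, -, hu, huS⟩ := exists_seq_tendsto_sSup ⟨_, mem_image_of_mem _ hΩ₀⟩ hbdd
  choose Ω hΩ hΩu using huS
  obtain ⟨K, hK, hKd, hKle⟩ := exists_isConvexDomain_le_muPQ_of_tendsto hp hpq hq hΩ hS0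
    ((funext hΩu : (fun n ↦ muPQ p q (Ω n)) = u) ▸ hu)
  exact ⟨K, hK, fun Ω hΩ ↦ (hle hΩ).trans (scaledMuPQ_of_diam_eq_one p q hKd ▸ hKle)⟩

end Existence

theorem exists_maximizer_muPQ_diam_general {N : ℕ} [NeZero N] {p q : ℝ} (hp : 0 < p)
    (hpq : p < q) (hq : 1 < q) :
    ∃ K : Set (EuclideanSpace ℝ (Fin N)), IsOpen K ∧ IsBounded K ∧ Convex ℝ K ∧ K.Nonempty ∧
      ∀ Ω : Set (EuclideanSpace ℝ (Fin N)), IsOpen Ω → IsBounded Ω → Convex ℝ Ω → Ω.Nonempty →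
        muPQ p q Ω * diam Ω ^ (p + N * p / q - N) ≤
          muPQ p q K * diam K ^ (p + N * p / q - N) := by
  obtain ⟨K, hK, hmax⟩ := exists_isMaxOn_scaledMuPQ (N := N) hp hpq hq
  exact ⟨K, hK.isOpen, hK.isBounded, hK.convex, hK.nonempty, fun Ω hΩo hΩb hΩc hΩne ↦
    hmax ⟨hΩo, hΩb, hΩc, hΩne⟩⟩

/-- Theorem 4.4, existence of a maximizer. Let `1 < p < q < p*`. Then
there exists an open bounded convex set `K ⊂ ℝ^N` maximizing the scale invariant quantity
`μ_{p,q}(Ω) · diam(Ω)^(p + Np/q - N)` among all open bounded convex sets `Ω ⊂ ℝ^N`. -/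
theorem exists_maximizer_muPQ_diam {N : ℕ} (hN : 2 ≤ N) (p q : ℝ) (hp : 1 < p)
    (hpq : p < q) (hq : ltCritical N p q) :
    ∃ K : Set (EuclideanSpace ℝ (Fin N)), IsOpen K ∧ Bornology.IsBounded K ∧
      Convex ℝ K ∧ K.Nonempty ∧
      ∀ Ω : Set (EuclideanSpace ℝ (Fin N)), IsOpen Ω → Bornology.IsBounded Ω →
        Convex ℝ Ω → Ω.Nonempty →
        muPQ p q Ω * diam Ω ^ (p + N * p / q - N) ≤
          muPQ p q K * diam K ^ (p + N * p / q - N) := by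
  have : NeZero N := ⟨by positivity⟩
  exact exists_maximizer_muPQ_diam_general (by positivity) hpq (hp.trans hpq)
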